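/- arXiv:0806.3874 — 2 statements merged into one kernel-verified Lean document; each statement's English description precedes it below -/
import Mathlib

section
/- Let L* be a generic element of K_{t,⪰}, let 1 ≤ s ≤ ⌊t/2⌋, and let G_t = H_t ∪ W_t. Assume dim π_{2s}(G_t^⊥) = dim π_{s−1}(G_t^⊥) and dim π_{2s}(G_t^⊥) = dim π_{2s}((G_t^+)^⊥). Then the ideal J generated by Ker M_s(L*) is real radical (J = √[ℝ]J) and is contained in the vanishing ideal of V_ℝ(I) (every polynomial in J vanishes at every common real zero of h₁,…,h_m). Moreover, if s ≥ D, where D = max_j deg(h_j), then J = √[ℝ]I. -/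
open MvPolynomial

noncomputable section

/-- The polynomial ring `ℝ[x₁,…,xₙ]`. -/
abbrev MP (n : ℕ) := MvPolynomial (Fin n) ℝ

/-- The total degree `|α|` of a monomial exponent `α`. -/
def mdeg {n : ℕ} (α : Fin n →₀ ℕ) : ℕ := α.sum fun _ e => e

/-- The subspace `ℝ[x]_t` of polynomials of total degree at most `t`. -/
abbrev RxT (n t : ℕ) : Submodule ℝ (MP n) := restrictTotalDegree (Fin n) ℝ t

/-- The kernel of the moment matrix `M_s(L)`: polynomials `p` of degree at most `s` such that
`L(p·x^β) = 0` for all monomials `x^β` of degree at most `s`. -/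
def momKer {n : ℕ} (L : Module.Dual ℝ (MP n)) (s : ℕ) : Set (MP n) :=
  {p | p.totalDegree ≤ s ∧ ∀ β : Fin n →₀ ℕ, mdeg β ≤ s → L (p * monomial β 1) = 0}

/-- Positive semidefiniteness of the moment matrix `M_t(L)`: `L(p²) ≥ 0` for all `p ∈ ℝ[x]_t`. -/
def momPSD {n : ℕ} (L : Module.Dual ℝ (MP n)) (t : ℕ) : Prop :=
  ∀ p : MP n, p.totalDegree ≤ t → 0 ≤ L (p * p)

/-- The bilinear/moment form of order `s` associated to `L`, as a map `ℝ[x]_s → (ℝ[x]_s)*`;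
its matrix in the monomial basis is the moment matrix `M_s(L)`. -/
def momBil {n : ℕ} (L : Module.Dual ℝ (MP n)) (s : ℕ) :
    RxT n s →ₗ[ℝ] Module.Dual ℝ (RxT n s) :=
  LinearMap.mk₂ ℝ (fun p q => L ((p : MP n) * (q : MP n)))
    (fun p p' q => by simp [add_mul])
    (fun c p q => by simp [smul_mul_assoc])
    (fun p q q' => by simp [mul_add])
    (fun c p q => by simp [mul_smul_comm])

/-- The rank of the moment matrix `M_s(L)`. -/
def momRank {n : ℕ} (L : Module.Dual ℝ (MP n)) (s : ℕ) : ℕ :=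
  Module.finrank ℝ (LinearMap.range (momBil L s))

/-- The column of the moment matrix `M_s(L)` indexed by the monomial `β`. -/
def momCol {n : ℕ} (L : Module.Dual ℝ (MP n)) (s : ℕ) (β : Fin n →₀ ℕ) :
    {α : Fin n →₀ ℕ // mdeg α ≤ s} → ℝ :=
  fun α => L (monomial (α.1 + β) 1)

/-- `G^⊥`: linear functionals vanishing on the set `G`. -/
def annih {n : ℕ} (G : Set (MP n)) : Submodule ℝ (Module.Dual ℝ (MP n)) :=
  (Submodule.span ℝ G).dualAnnihilator

/-- The projection `π_s` sending a linear functional to its restriction to `ℝ[x]_s`. -/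
def projDual (n s : ℕ) : Module.Dual ℝ (MP n) →ₗ[ℝ] Module.Dual ℝ (RxT n s) :=
  (RxT n s).subtype.dualMap

/-- `dim π_s(G^⊥)`. -/
def dimProj {n : ℕ} (s : ℕ) (G : Set (MP n)) : ℕ :=
  Module.finrank ℝ (Submodule.map (projDual n s) (annih G))

/-- The one-degree prolongation `S⁺ = S ∪ x₁S ∪ … ∪ xₙS` of a set of polynomials. -/
def plusOp {n : ℕ} (G : Set (MP n)) : Set (MP n) :=
  G ∪ ⋃ i : Fin n, (fun p => X i * p) '' G

/-- The set `H_t = {x^α h_j : |α| + deg h_j ≤ t}` of prolongations of the generators. -/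
def Hset {n m : ℕ} (h : Fin m → MP n) (t : ℕ) : Set (MP n) :=
  {p | ∃ (α : Fin n →₀ ℕ) (j : Fin m), mdeg α + (h j).totalDegree ≤ t ∧ p = monomial α 1 * h j}

/-- The cone `K_{t,⪰}` of linear functionals vanishing on `H_t` with `M_{⌊t/2⌋}(L) ⪰ 0`. -/
def Kpos {n m : ℕ} (h : Fin m → MP n) (t : ℕ) : Set (Module.Dual ℝ (MP n)) :=
  {L | (∀ g ∈ Hset h t, L g = 0) ∧ momPSD L (t / 2)}

/-- `L*` is generic in `K_{t,⪰}`: it belongs to `K_{t,⪰}` and its moment matrix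
`M_{⌊t/2⌋}(L*)` has maximum rank over `K_{t,⪰}`. -/
def Generic {n m : ℕ} (h : Fin m → MP n) (t : ℕ) (Ls : Module.Dual ℝ (MP n)) : Prop :=
  Ls ∈ Kpos h t ∧ ∀ L ∈ Kpos h t, momRank L (t / 2) ≤ momRank Ls (t / 2)

/-- `W_t = {x^α g : |α| ≤ ⌊t/2⌋, g ∈ N_t}`, with `N_t = Ker M_{⌊t/2⌋}(L*)` for `L*` generic. -/
def Wset {n m : ℕ} (h : Fin m → MP n) (t : ℕ) (Ls : Module.Dual ℝ (MP n)) : Set (MP n) :=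
  {p | ∃ (α : Fin n →₀ ℕ) (g : MP n), mdeg α ≤ t / 2 ∧ g ∈ momKer Ls (t / 2) ∧
    p = monomial α 1 * g}

/-- The real radical `√[ℝ]I` of an ideal `I`. -/
def realRad {n : ℕ} (I : Ideal (MP n)) : Set (MP n) :=
  {p | ∃ m : ℕ, 0 < m ∧ ∃ (k : ℕ) (q : Fin k → MP n), p ^ (2 * m) + ∑ j, q j ^ 2 ∈ I}

/-- A set of monomials closed under taking divisions. -/
def DivClosed {n : ℕ} (B : Set (Fin n →₀ ℕ)) : Prop :=
  ∀ a ∈ B, ∀ a' : Fin n →₀ ℕ, a' ≤ a → a' ∈ B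

/-- A set of monomials connected to 1: each `m ∈ B` is a product `m = m₁⋯m_k` with `m₁ = 1`
and all partial products `m₁⋯m_h ∈ B` (written additively on exponents). -/
def ConnectedToOne {n : ℕ} (B : Set (Fin n →₀ ℕ)) : Prop :=
  ∀ a ∈ B, ∃ (k : ℕ) (c : Fin (k + 1) → (Fin n →₀ ℕ)),
    c 0 = 0 ∧ (∀ j : Fin (k + 1), (∑ i ∈ Finset.univ.filter (· ≤ j), c i) ∈ B) ∧
    (∑ i, c i) = a

/-- `Span_ℝ(B)` for a set `B` of monomials. -/
def spanMon {n : ℕ} (B : Set (Fin n →₀ ℕ)) : Submodule ℝ (MP n) :=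
  Submodule.span ℝ ((fun a => (monomial a 1 : MP n)) '' B)

/-- The border `∂B = B⁺ \ B` of a set of monomials. -/
def borderSet {n : ℕ} (B : Set (Fin n →₀ ℕ)) : Set (Fin n →₀ ℕ) :=
  {a | a ∉ B ∧ ∃ i : Fin n, ∃ b ∈ B, a = b + Finsupp.single i 1}

end

/-! ### Real radical -/

theorem isq_iff {n : ℕ} (p : MP n) : IsSumSq p ↔ ∃ (k : ℕ) (q : Fin k → MP n), ∑ j, q j ^ 2 = p := by
  constructor
  · intro hp
    induction hp with
    | zero => exact ⟨0, Fin.elim0, by simp⟩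
    | sq_add a _ ih =>
      obtain ⟨k, q, rfl⟩ := ih
      refine ⟨k + 1, Fin.cons a q, ?_⟩
      rw [Fin.sum_univ_succ]
      simp [sq]
  · rintro ⟨k, q, rfl⟩
    exact IsSumSq.sum_sq _ _

theorem mem_realRad {n : ℕ} (I : Ideal (MP n)) (p : MP n) :
    p ∈ realRad I ↔ ∃ m : ℕ, 0 < m ∧ ∃ σ, IsSumSq σ ∧ p ^ (2 * m) + σ ∈ I := by
  constructor
  · rintro ⟨m, hm, k, q, h⟩
    exact ⟨m, hm, _, IsSumSq.sum_sq _ _, h⟩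
  · rintro ⟨m, hm, σ, hσ, h⟩
    obtain ⟨k, q, rfl⟩ := (isq_iff σ).1 hσ
    exact ⟨m, hm, k, q, h⟩

theorem isq_pow {R : Type*} [CommRing R] {a : R} (ha : IsSumSq a) (k : ℕ) : IsSumSq (a ^ k) := by
  induction k with
  | zero => simp
  | succ k ih => rw [pow_succ]; exact ih.mul ha

theorem isq_sq {R : Type*} [CommRing R] (a : R) : IsSumSq (a ^ 2) := by
  rw [sq]; exact IsSumSq.mul_self a

theorem isq_even {R : Type*} [CommRing R] (a : R) (k : ℕ) : IsSumSq (a ^ (2 * k)) := by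
  rw [pow_mul]; exact isq_pow (isq_sq a) k

theorem isq_add_pow {R : Type*} [CommRing R] {a b : R} (ha : IsSumSq a) (hb : IsSumSq b) (k : ℕ) :
    ∃ σ, IsSumSq σ ∧ (a + b) ^ k = a ^ k + σ := by
  induction k with
  | zero => exact ⟨0, IsSumSq.zero, by simp⟩
  | succ k ih =>
    obtain ⟨σ, hσ, h⟩ := ih
    refine ⟨a ^ k * b + σ * (a + b), ((isq_pow ha k).mul hb).add (hσ.mul (ha.add hb)), ?_⟩
    rw [pow_succ, h]; ring

/-- sums of squares `x` with `x + σ ∈ I`. -/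
theorem isq_neg_sum {R : Type*} [CommRing R] {I : Ideal R} {ι : Type*} (s : Finset ι) (f : ι → R)
    (hf : ∀ i ∈ s, ∃ σ, IsSumSq σ ∧ f i + σ ∈ I) : ∃ σ, IsSumSq σ ∧ ∑ i ∈ s, f i + σ ∈ I := by
  classical
  induction s using Finset.induction_on with
  | empty => exact ⟨0, IsSumSq.zero, by simp⟩
  | insert a s ha ih =>
    obtain ⟨σ, hσ, h⟩ := ih fun i hi => hf i (Finset.mem_insert_of_mem hi)
    obtain ⟨τ, hτ, h'⟩ := hf a (Finset.mem_insert_self _ _)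
    refine ⟨τ + σ, hτ.add hσ, ?_⟩
    rw [Finset.sum_insert ha]
    convert I.add_mem h' h using 1; ring

theorem rr_bump {n : ℕ} {I : Ideal (MP n)} {p : MP n} {m : ℕ}
    (h : ∃ σ, IsSumSq σ ∧ p ^ (2 * m) + σ ∈ I) (k : ℕ) (hk : m ≤ k) (τ : MP n) (hτ : IsSumSq τ) :
    ∃ σ, IsSumSq σ ∧ p ^ (2 * k) * τ + σ ∈ I := by
  obtain ⟨σ, hσ, h⟩ := h
  obtain ⟨l, rfl⟩ := Nat.exists_eq_add_of_le hk
  refine ⟨p ^ (2 * l) * τ * σ, ((isq_even p l).mul hτ).mul hσ, ?_⟩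
  convert I.mul_mem_left (p ^ (2 * l) * τ) h using 1
  ring

theorem rr_add {n : ℕ} {I : Ideal (MP n)} {p q : MP n} (hp : p ∈ realRad I) (hq : q ∈ realRad I) :
    p + q ∈ realRad I := by
  rw [mem_realRad] at *
  obtain ⟨a, ha, hp⟩ := hp
  obtain ⟨b, hb, hq⟩ := hq
  refine ⟨a + b, by omega, ?_⟩
  have key : ∃ σ, IsSumSq σ ∧ (p ^ 2 + q ^ 2) ^ (a + b) + σ ∈ I := by
    rw [add_pow]
    apply isq_neg_sum
    intro i hi
    rw [Finset.mem_range] at hi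
    rw [← pow_mul, ← pow_mul]
    by_cases hia : a ≤ i
    · rw [mul_assoc]
      exact rr_bump hp i hia _ ((isq_even _ _).mul (IsSumSq.natCast _))
    · obtain ⟨σ, hσ, h⟩ := rr_bump hq (a + b - i) (by omega) _
        ((isq_even p i).mul (IsSumSq.natCast ((a + b).choose i)))
      refine ⟨σ, hσ, ?_⟩
      convert h using 1; ring
  obtain ⟨σ, hσ, h⟩ := key
  obtain ⟨τ, hτ, h2⟩ := isq_add_pow (isq_sq (p + q)) (isq_sq (p - q)) (a + b)
  refine ⟨τ + 2 ^ (a + b) * σ, hτ.add (IsSumSq.mul ?_ hσ), ?_⟩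
  · exact_mod_cast IsSumSq.natCast (R := MP n) (2 ^ (a + b))
  · convert I.mul_mem_left (2 ^ (a + b)) h using 1
    have h3 : (2 : MP n) * (p ^ 2 + q ^ 2) = (p + q) ^ 2 + (p - q) ^ 2 := by ring
    rw [mul_add (2 ^ (a + b) : MP n), ← mul_pow, h3, h2, pow_mul, add_assoc]

/-- The real radical as an ideal. -/
def RR {n : ℕ} (I : Ideal (MP n)) : Ideal (MP n) where
  carrier := realRad I
  add_mem' := rr_add
  zero_mem' := ⟨1, one_pos, 0, Fin.elim0, by simp⟩
  smul_mem' := by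
    intro c p hp
    rw [mem_realRad] at *
    obtain ⟨a, ha, σ, hσ, h⟩ := hp
    refine ⟨a, ha, c ^ (2 * a) * σ, (isq_even c a).mul hσ, ?_⟩
    convert I.mul_mem_left (c ^ (2 * a)) h using 1
    rw [smul_eq_mul]; ring

theorem le_RR {n : ℕ} (I : Ideal (MP n)) {p : MP n} (hp : p ∈ I) : p ∈ realRad I :=
  ⟨1, one_pos, 0, Fin.elim0, by simpa [sq] using I.mul_mem_left p hp⟩

theorem RR_real {n : ℕ} (I : Ideal (MP n)) (p σ : MP n) (hσ : IsSumSq σ)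
    (h : p * p + σ ∈ RR I) : p ∈ RR I := by
  have h : p * p + σ ∈ realRad I := h
  show p ∈ realRad I
  rw [mem_realRad] at *
  obtain ⟨a, ha, τ, hτ, h⟩ := h
  obtain ⟨ρ, hρ, h2⟩ := isq_add_pow (IsSumSq.mul_self p) hσ (2 * a)
  refine ⟨2 * a, by omega, ρ + τ, hρ.add hτ, ?_⟩
  convert h using 1
  rw [h2]; ring

theorem isq_lift {R : Type*} [CommRing R] (I : Ideal R) (a : R ⧸ I) (ha : IsSumSq a) :
    ∃ σ : R, IsSumSq σ ∧ Ideal.Quotient.mk I σ = a := by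
  induction ha with
  | zero => exact ⟨0, IsSumSq.zero, by simp⟩
  | sq_add a _ ih =>
    obtain ⟨σ, hσ, rfl⟩ := ih
    obtain ⟨b, rfl⟩ := Ideal.Quotient.mk_surjective a
    exact ⟨b * b + σ, IsSumSq.sq_add _ hσ, by simp⟩

theorem quot_real {n : ℕ} (I : Ideal (MP n)) (a σ : MP n ⧸ RR I) (hσ : IsSumSq σ)
    (h : a * a + σ = 0) : a = 0 := by
  obtain ⟨σ, hσ', rfl⟩ := isq_lift _ _ hσ
  obtain ⟨p, rfl⟩ := Ideal.Quotient.mk_surjective a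
  rw [← map_mul, ← map_add, Ideal.Quotient.eq_zero_iff_mem] at h
  rw [Ideal.Quotient.eq_zero_iff_mem]
  exact RR_real I p σ hσ' h

/-! ### Strictly positive functional -/

theorem exists_pos_functional {Q : Type*} [CommRing Q] [Algebra ℝ Q]
    (hreal : ∀ a σ : Q, IsSumSq σ → a * a + σ = 0 → a = 0)
    (W : Submodule ℝ Q) [FiniteDimensional ℝ W] :
    ∃ L : Q →ₗ[ℝ] ℝ, ∀ w ∈ W, w ≠ 0 → 0 < L (w * w) := by
  classical
  let b := Module.finBasis ℝ W
  set k := Module.finrank ℝ W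
  let μ : (Fin k → Fin k → ℝ) →ₗ[ℝ] Q :=
    { toFun := fun A => ∑ i, ∑ j, A i j • ((b i : Q) * (b j : Q))
      map_add' := by intro A B; simp [add_smul, Finset.sum_add_distrib]
      map_smul' := by intro c A; simp [Finset.smul_sum, mul_smul] }
  let gram : (Fin k → Fin k → ℝ) → (Fin k → Fin k → ℝ) := fun B i j => ∑ l, B l i * B l j
  have hμg : ∀ B, μ (gram B) = ∑ l, (∑ i, B l i • (b i : Q)) * (∑ i, B l i • (b i : Q)) := by
    intro B
    simp only [μ, gram, LinearMap.coe_mk, AddHom.coe_mk, Finset.sum_mul_sum, Finset.sum_smul,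
      smul_mul_smul_comm]
    rw [Finset.sum_comm_cycle]
  let T : Set (Fin k → Fin k → ℝ) := {B | ∑ i, ∑ j, B i j ^ 2 = 1}
  have hTc : IsCompact T := by
    have h1 : IsCompact (Set.pi Set.univ fun _ : Fin k => Set.pi Set.univ fun _ : Fin k => Set.Icc (-1 : ℝ) 1) :=
      isCompact_univ_pi fun _ => isCompact_univ_pi fun _ => isCompact_Icc
    refine h1.of_isClosed_subset ?_ ?_
    · exact isClosed_eq (by fun_prop) continuous_const
    · intro B hB i _ j _
      have hB : ∑ i, ∑ j, B i j ^ 2 = 1 := hB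
      have h2 : B i j ^ 2 ≤ ∑ j, B i j ^ 2 :=
        Finset.single_le_sum (f := fun j => B i j ^ 2) (fun _ _ => sq_nonneg _) (Finset.mem_univ j)
      have h3 : ∑ j, B i j ^ 2 ≤ ∑ i, ∑ j, B i j ^ 2 :=
        Finset.single_le_sum (f := fun i => ∑ j, B i j ^ 2)
          (fun _ _ => Finset.sum_nonneg fun _ _ => sq_nonneg _) (Finset.mem_univ i)
      rw [Set.mem_Icc]
      constructor <;> nlinarith
  let S := gram '' T
  have hSc : IsCompact S := hTc.image (by simp only [gram]; fun_prop)
  have htr : ∀ B, ∑ i, gram B i i = ∑ i, ∑ j, B i j ^ 2 := by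
    intro B
    simp only [gram]
    rw [Finset.sum_comm]
    simp [sq]
  have hgp : ∀ B : Fin k → Fin k → ℝ, gram B = ((Matrix.of B).transpose * Matrix.of B) := by
    intro B; ext i j; simp [gram, Matrix.mul_apply]
  have hSconv : Convex ℝ S := by
    rintro _ ⟨B, hB, rfl⟩ _ ⟨C, hC, rfl⟩ x y hx hy hxy
    have hB : ∑ i, ∑ j, B i j ^ 2 = 1 := hB
    have hC : ∑ i, ∑ j, C i j ^ 2 = 1 := hC
    have h1 : Matrix.PosSemidef (x • ((Matrix.of B).transpose * Matrix.of B)) := by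
      have := (Matrix.posSemidef_conjTranspose_mul_self (Matrix.of B)).smul hx
      simpa [Matrix.conjTranspose_eq_transpose_of_trivial] using this
    have h2 : Matrix.PosSemidef (y • ((Matrix.of C).transpose * Matrix.of C)) := by
      have := (Matrix.posSemidef_conjTranspose_mul_self (Matrix.of C)).smul hy
      simpa [Matrix.conjTranspose_eq_transpose_of_trivial] using this
    have h3 := h1.add h2
    obtain ⟨D, hD⟩ : ∃ D : Matrix (Fin k) (Fin k) ℝ, x • ((Matrix.of B).transpose * Matrix.of B) + y • ((Matrix.of C).transpose * Matrix.of C) = D.transpose * D := by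
      open scoped MatrixOrder Matrix.Norms.L2Operator in
      obtain ⟨D, hD⟩ := CStarAlgebra.nonneg_iff_eq_star_mul_self.mp h3.nonneg
      exact ⟨D, by rw [hD, Matrix.star_eq_conjTranspose,
        Matrix.conjTranspose_eq_transpose_of_trivial]⟩
    have hD' : gram (fun i j => D i j) = x • gram B + y • gram C := by
      rw [hgp, hgp, hgp]; exact hD.symm
    refine ⟨fun i j => D i j, ?_, hD'⟩
    show ∑ i, ∑ j, D i j ^ 2 = 1
    have h4 := htr (fun i j => D i j)
    rw [hD'] at h4
    refine h4.symm.trans ?_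
    simp only [Pi.add_apply, Pi.smul_apply, smul_eq_mul, Finset.sum_add_distrib, ← Finset.mul_sum, htr, hB, hC]
    linarith
  have hdisj : Disjoint S (LinearMap.ker μ : Set (Fin k → Fin k → ℝ)) := by
    rw [Set.disjoint_left]
    rintro _ ⟨B, hB, rfl⟩ hk
    have hB : ∑ i, ∑ j, B i j ^ 2 = 1 := hB
    have hk : μ (gram B) = 0 := hk
    rw [hμg] at hk
    have h0 : ∀ l i, B l i = 0 := by
      intro l
      have h1 : (∑ i, B l i • (b i : Q)) = 0 := by
        rw [← Finset.add_sum_erase _ _ (Finset.mem_univ l)] at hk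
        exact hreal _ _ (IsSumSq.sum_mul_self _ _) hk
      have h2 : ∑ i, B l i • b i = 0 := by
        apply Subtype.ext; simpa using h1
      exact Fintype.linearIndependent_iff.1 b.linearIndependent _ h2
    simp [h0] at hB
  obtain ⟨f, u, v, hfu, huv, hfv⟩ := geometric_hahn_banach_compact_closed hSconv hSc
    (LinearMap.ker μ).convex (Submodule.closed_of_finiteDimensional _) hdisj
  have hv : v < 0 := by simpa using hfv 0 (Submodule.zero_mem _)
  have hf0 : ∀ A ∈ LinearMap.ker μ, f A = 0 := by
    intro A hA
    by_contra hne
    have := hfv ((v / f A) • A) (Submodule.smul_mem _ _ hA)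
    rw [map_smul, smul_eq_mul, div_mul_cancel₀ _ hne] at this
    exact lt_irrefl _ this
  have hmem : (-f : (Fin k → Fin k → ℝ) →L[ℝ] ℝ).toLinearMap ∈ LinearMap.range μ.dualMap := by
    rw [LinearMap.range_dualMap_eq_dualAnnihilator_ker, Submodule.mem_dualAnnihilator]
    intro A hA
    simp [hf0 A hA]
  obtain ⟨L, hL⟩ := hmem
  have hL' : ∀ A, L (μ A) = - f A := fun A => by
    have := congrArg (fun g => g A) hL
    simpa using this
  refine ⟨L, ?_⟩
  intro w hw hw0
  obtain ⟨c, hc⟩ : ∃ c : Fin k → ℝ, ∑ i, c i • (b i : Q) = w := by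
    refine ⟨fun i => b.repr ⟨w, hw⟩ i, ?_⟩
    have := congrArg Subtype.val (b.sum_repr ⟨w, hw⟩)
    rw [Submodule.coe_sum] at this
    exact this
  have hcpos : 0 < ∑ j, c j ^ 2 := by
    rcases (Finset.sum_nonneg fun j (_ : j ∈ Finset.univ) => sq_nonneg (c j)).lt_or_eq with h | h
    · exact h
    · exfalso
      have := (Finset.sum_eq_zero_iff_of_nonneg fun j (_ : j ∈ Finset.univ) => sq_nonneg (c j)).1 h.symm
      apply hw0; rw [← hc]
      refine Finset.sum_eq_zero fun i hi => ?_
      have := this i hi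
      simp at this
      simp [this]
  have hkpos : Nonempty (Fin k) := by
    by_contra hne
    rw [not_nonempty_iff] at hne
    simp at hcpos
  obtain ⟨l0⟩ := hkpos
  set r := Real.sqrt (∑ j, c j ^ 2) with hr
  have hr0 : 0 < r := Real.sqrt_pos.2 hcpos
  have hr2 : r ^ 2 = ∑ j, c j ^ 2 := Real.sq_sqrt hcpos.le
  let B : Fin k → Fin k → ℝ := fun l i => if l = l0 then r⁻¹ * c i else 0
  have hBT : B ∈ T := by
    show ∑ i, ∑ j, B i j ^ 2 = 1
    rw [Finset.sum_eq_single l0 (by intro l _ hl; simp [B, hl]) (by simp)]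
    simp only [B, if_true, mul_pow, ← Finset.mul_sum, ← hr2]
    field_simp
  have hμB : μ (gram B) = (r⁻¹ * r⁻¹) • (w * w) := by
    rw [hμg, Finset.sum_eq_single l0 (by intro l _ hl; simp [B, hl]) (by simp)]
    simp only [B, if_true, mul_smul, ← Finset.smul_sum, hc]
    simp [smul_smul]
  have h1 := hfu _ ⟨B, hBT, rfl⟩
  have h2 := hL' (gram B)
  rw [hμB, map_smul, smul_eq_mul] at h2
  have h3 : 0 < r⁻¹ * r⁻¹ * L (w * w) := by rw [h2]; linarith
  exact (pos_iff_pos_of_mul_pos h3).1 (by positivity)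

/-! ### Moment forms -/

theorem mdeg_eq {n : ℕ} (α : Fin n →₀ ℕ) (c : ℝ) (hc : c ≠ 0) :
    (monomial α c : MP n).totalDegree = mdeg α := by
  rw [totalDegree_monomial _ hc]; rfl

theorem mom_ext {n : ℕ} (L : Module.Dual ℝ (MP n)) (s : ℕ) (p : MP n)
    (h : ∀ β : Fin n →₀ ℕ, mdeg β ≤ s → L (p * monomial β 1) = 0) (q : MP n)
    (hq : q.totalDegree ≤ s) : L (p * q) = 0 := by
  rw [q.as_sum, Finset.mul_sum, map_sum]
  refine Finset.sum_eq_zero fun β hβ => ?_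
  have h1 : mdeg β ≤ s := (le_totalDegree hβ).trans hq
  have h2 : (monomial β (coeff β q) : MP n) = coeff β q • monomial β 1 := by
    rw [smul_monomial, smul_eq_mul, mul_one]
  rw [h2, mul_smul_comm, map_smul, h β h1, smul_zero]

theorem mem_momKer_iff {n : ℕ} (L : Module.Dual ℝ (MP n)) (s : ℕ) (p : MP n) :
    p ∈ momKer L s ↔ p.totalDegree ≤ s ∧ ∀ q : MP n, q.totalDegree ≤ s → L (p * q) = 0 := by
  constructor
  · rintro ⟨h1, h2⟩
    exact ⟨h1, mom_ext L s p h2⟩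
  · rintro ⟨h1, h2⟩
    refine ⟨h1, fun β hβ => h2 _ ?_⟩
    rwa [mdeg_eq _ _ one_ne_zero]

/-- Cauchy–Schwarz, kernel version. -/
theorem psd_ker {n : ℕ} (L : Module.Dual ℝ (MP n)) (p q : MP n)
    (h : ∀ c : ℝ, 0 ≤ L ((q + c • p) * (q + c • p))) (hp : L (p * p) = 0) : L (p * q) = 0 := by
  by_contra hne
  have e : ∀ c : ℝ, L ((q + c • p) * (q + c • p)) = L (q * q) + 2 * c * L (p * q) := by
    intro c
    have : (q + c • p) * (q + c • p) = q * q + (2 * c) • (p * q) + (c * c) • (p * p) := by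
      simp only [smul_eq_C_mul, C_mul, map_ofNat]; ring
    rw [this, map_add, map_add, map_smul, map_smul, hp]; simp
  have h1 := h (-(L (q * q) + 1) / (2 * L (p * q)))
  rw [e] at h1
  have h2 : 2 * (-(L (q * q) + 1) / (2 * L (p * q))) * L (p * q) = -(L (q * q) + 1) := by
    field_simp
  linarith

theorem deg_add_smul {n d : ℕ} {p q : MP n} (hp : p.totalDegree ≤ d) (hq : q.totalDegree ≤ d)
    (c : ℝ) : (q + c • p).totalDegree ≤ d :=
  (totalDegree_add _ _).trans (max_le hq ((totalDegree_smul_le _ _).trans hp))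

theorem mem_momKer_of_sq {n : ℕ} (L : Module.Dual ℝ (MP n)) (d : ℕ) (hL : momPSD L d) (p : MP n)
    (hp : p.totalDegree ≤ d) (h0 : L (p * p) = 0) : p ∈ momKer L d := by
  rw [mem_momKer_iff]
  exact ⟨hp, fun q hq => psd_ker L p q (fun c => hL _ (deg_add_smul hp hq c)) h0⟩

theorem momKer_mono {n : ℕ} (L : Module.Dual ℝ (MP n)) (s d : ℕ) (hsd : s ≤ d) (hL : momPSD L d)
    {p : MP n} (hp : p ∈ momKer L s) : p ∈ momKer L d := by
  rw [mem_momKer_iff] at hp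
  exact mem_momKer_of_sq L d hL p (hp.1.trans hsd) (hp.2 p hp.1)

theorem mem_ker_momBil {n : ℕ} (L : Module.Dual ℝ (MP n)) (d : ℕ) (p : RxT n d) :
    p ∈ LinearMap.ker (momBil L d) ↔ (p : MP n) ∈ momKer L d := by
  rw [mem_momKer_iff, LinearMap.mem_ker]
  constructor
  · intro h
    refine ⟨(mem_restrictTotalDegree _ _ _).1 p.2, fun q hq => ?_⟩
    exact congrArg (fun f => f ⟨q, (mem_restrictTotalDegree _ _ _).2 hq⟩) h
  · rintro ⟨-, h⟩
    ext q
    exact h q ((mem_restrictTotalDegree _ _ _).1 q.2)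

theorem generic_ker {n m t : ℕ} (h : Fin m → MP n) (Ls : Module.Dual ℝ (MP n))
    (hgen : Generic h t Ls) (L : Module.Dual ℝ (MP n)) (hL : L ∈ Kpos h t) (p : MP n)
    (hp : p ∈ momKer Ls (t / 2)) : L (p * p) = 0 := by
  have hsum : Ls + L ∈ Kpos h t := by
    refine ⟨fun g hg => ?_, fun q hq => ?_⟩
    · simp [hgen.1.1 g hg, hL.1 g hg]
    · have := hgen.1.2 q hq
      have := hL.2 q hq
      simp only [LinearMap.add_apply]; linarith
  have hle : LinearMap.ker (momBil (Ls + L) (t / 2)) ≤ LinearMap.ker (momBil Ls (t / 2)) := by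
    intro q hq
    rw [mem_ker_momBil] at *
    have hq' := (mem_momKer_iff _ _ _).1 hq
    have h0 := hq'.2 _ hq'.1
    have h1 := hgen.1.2 _ hq'.1
    have h2 := hL.2 _ hq'.1
    simp only [LinearMap.add_apply] at h0
    exact mem_momKer_of_sq _ _ hgen.1.2 _ hq'.1 (by linarith)
  have hr := hgen.2 _ hsum
  have e1 := LinearMap.finrank_range_add_finrank_ker (momBil (Ls + L) (t / 2))
  have e2 := LinearMap.finrank_range_add_finrank_ker (momBil Ls (t / 2))
  unfold momRank at hr
  have heq := Submodule.eq_of_le_of_finrank_le hle (by omega)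
  have hp1 := (mem_momKer_iff _ _ _).1 hp
  have hp2 : (⟨p, (mem_restrictTotalDegree _ _ _).2 hp1.1⟩ : RxT n (t / 2)) ∈
      LinearMap.ker (momBil Ls (t / 2)) := by rw [mem_ker_momBil]; exact hp
  rw [← heq, mem_ker_momBil, mem_momKer_iff] at hp2
  have h3 := hp2.2 p hp1.1
  simp only [LinearMap.add_apply, hp1.2 p hp1.1, zero_add] at h3
  exact h3

theorem eval_mem_Kpos {n m : ℕ} (t : ℕ) (h : Fin m → MP n) (v : Fin n → ℝ)
    (hv : ∀ j, eval v (h j) = 0) : (aeval v : MP n →ₐ[ℝ] ℝ).toLinearMap ∈ Kpos h t := by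
  refine ⟨?_, ?_⟩
  · rintro g ⟨α, j, -, rfl⟩
    simp [hv j]
  · intro p _
    simpa using mul_self_nonneg _

theorem momKer_sub_realRad {n m t : ℕ} (h : Fin m → MP n) (Ls : Module.Dual ℝ (MP n))
    (hgen : Generic h t Ls) (p : MP n) (hp : p ∈ momKer Ls (t / 2)) :
    p ∈ RR (Ideal.span (Set.range h)) := by
  set U := RR (Ideal.span (Set.range h)) with hU
  let φ : MP n →ₗ[ℝ] MP n ⧸ U := (Ideal.Quotient.mkₐ ℝ U).toLinearMap
  obtain ⟨L, hL⟩ := exists_pos_functional (quot_real (Ideal.span (Set.range h)))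
    ((RxT n (t / 2)).map φ)
  have hK : L.comp φ ∈ Kpos h t := by
    refine ⟨?_, ?_⟩
    · rintro g ⟨α, j, -, rfl⟩
      have : φ (monomial α 1 * h j) = 0 := by
        show Ideal.Quotient.mk U _ = 0
        rw [Ideal.Quotient.eq_zero_iff_mem]
        exact U.mul_mem_left _ (le_RR _ (Ideal.subset_span ⟨j, rfl⟩))
      rw [LinearMap.comp_apply, this, map_zero]
    · intro q hq
      have e : φ (q * q) = φ q * φ q := map_mul (Ideal.Quotient.mk U) q q
      rw [LinearMap.comp_apply, e]
      by_cases h0 : φ q = 0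
      · simp [h0]
      · exact (hL _ ⟨q, (mem_restrictTotalDegree _ _ _).2 hq, rfl⟩ h0).le
  have h1 := generic_ker h Ls hgen _ hK p hp
  by_contra hne
  have h0 : φ p ≠ 0 := by
    intro h0
    exact hne (Ideal.Quotient.eq_zero_iff_mem.1 h0)
  have h2 := hL _ ⟨p, (mem_restrictTotalDegree _ _ _).2 hp.1, rfl⟩ h0
  have e : φ (p * p) = φ p * φ p := map_mul (Ideal.Quotient.mk U) p p
  rw [LinearMap.comp_apply, e] at h1
  linarith

/-! ### Dimension conditions -/

theorem dim_cond1 {n a b : ℕ} (hab : a ≤ b) (G : Set (MP n)) (h : dimProj b G = dimProj a G)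
    (p : MP n) (hp : p.totalDegree ≤ b) : ∃ q : MP n, q.totalDegree ≤ a ∧ p - q ∈ Submodule.span ℝ G := by
  have hle : RxT n a ≤ RxT n b := by
    intro q hq
    rw [mem_restrictTotalDegree] at *
    omega
  let r : Module.Dual ℝ (RxT n b) →ₗ[ℝ] Module.Dual ℝ (RxT n a) := (Submodule.inclusion hle).dualMap
  have hcomp : projDual n a = r.comp (projDual n b) := rfl
  have hmap : ((annih G).map (projDual n b)).map r = (annih G).map (projDual n a) := by
    rw [hcomp, Submodule.map_comp]
  have hinj : LinearMap.ker (r.domRestrict ((annih G).map (projDual n b))) = ⊥ := by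
    have e := LinearMap.finrank_range_add_finrank_ker (K := ℝ) (V := (annih G).map (projDual n b))
      (V₂ := Module.Dual ℝ (RxT n a)) (r.domRestrict ((annih G).map (projDual n b)))
    rw [LinearMap.range_domRestrict, hmap] at e
    unfold dimProj at h
    refine (Submodule.finrank_eq_zero (R := ℝ) (M := (annih G).map (projDual n b))
      (S := LinearMap.ker (r.domRestrict ((annih G).map (projDual n b))))).1 ?_
    omega
  have hmem : p ∈ RxT n a ⊔ Submodule.span ℝ G := by
    by_contra hne
    obtain ⟨f, hf, hf'⟩ := Submodule.exists_le_ker_of_notMem hne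
    have hfa : f ∈ annih G := by
      unfold annih
      rw [Submodule.mem_dualAnnihilator]
      exact fun w hw => hf' (Submodule.mem_sup_right hw)
    have h0 : (⟨projDual n b f, Submodule.mem_map_of_mem hfa⟩ : (annih G).map (projDual n b)) ∈
        LinearMap.ker (r.domRestrict ((annih G).map (projDual n b))) := by
      rw [LinearMap.mem_ker]
      ext w
      exact hf' (Submodule.mem_sup_left w.2)
    rw [hinj, Submodule.mem_bot] at h0
    have h1 := congrArg Subtype.val h0
    exact hf (congrArg (fun g => g ⟨p, (mem_restrictTotalDegree _ _ _).2 hp⟩) h1)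
  obtain ⟨q, hq, v, hv, rfl⟩ := Submodule.mem_sup.1 hmem
  exact ⟨q, (mem_restrictTotalDegree _ _ _).1 hq, by simpa using hv⟩

theorem dim_cond2 {n b : ℕ} (G : Set (MP n)) (h : dimProj b G = dimProj b (plusOp G))
    (i : Fin n) (p : MP n) (hpG : p ∈ Submodule.span ℝ G) (hp : (X i * p).totalDegree ≤ b) :
    X i * p ∈ Submodule.span ℝ G := by
  have hle : annih (plusOp G) ≤ annih G := by
    unfold annih
    exact Submodule.dualAnnihilator_anti (Submodule.span_mono Set.subset_union_left)
  have heq := Submodule.eq_of_le_of_finrank_eq (Submodule.map_mono (f := projDual n b) hle) h.symm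
  have hplus : X i * p ∈ Submodule.span ℝ (plusOp G) := by
    have : Submodule.map (LinearMap.mulLeft ℝ (X i)) (Submodule.span ℝ G) ≤
        Submodule.span ℝ (plusOp G) := by
      rw [Submodule.map_span]
      apply Submodule.span_mono
      rintro _ ⟨q, hq, rfl⟩
      exact Or.inr (Set.mem_iUnion.2 ⟨i, q, hq, rfl⟩)
    exact this ⟨p, hpG, rfl⟩
  by_contra hne
  obtain ⟨f, hf, hf'⟩ := Submodule.exists_le_ker_of_notMem hne
  have hfa : f ∈ annih G := by
    unfold annih
    rw [Submodule.mem_dualAnnihilator]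
    exact fun w hw => hf' hw
  have h1 : projDual n b f ∈ (annih G).map (projDual n b) := Submodule.mem_map_of_mem hfa
  rw [← heq] at h1
  obtain ⟨g, hg, hgf⟩ := h1
  have h2 : g (X i * p) = f (X i * p) :=
    congrArg (fun g => g ⟨X i * p, (mem_restrictTotalDegree _ _ _).2 hp⟩) hgf
  have h3 : g (X i * p) = 0 := (Submodule.mem_dualAnnihilator _).1 hg _ hplus
  exact hf (by rw [← h2, h3])

/-! ### Border-basis extension -/

open scoped IsMulCommutative in
theorem exists_hom_of_comm {n : ℕ} {A : Type*} [Ring A] [Algebra ℝ A] (T : Fin n → A)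
    (hT : ∀ i j, T i * T j = T j * T i) : ∃ Θ : MP n →ₐ[ℝ] A, ∀ i, Θ (X i) = T i := by
  have : IsMulCommutative (Algebra.adjoin ℝ (Set.range T)) :=
    Algebra.isMulCommutative_adjoin ℝ (by rintro _ ⟨i, rfl⟩ _ ⟨j, rfl⟩; exact hT i j)
  let f : Fin n → Algebra.adjoin ℝ (Set.range T) := fun i => ⟨T i, Algebra.subset_adjoin ⟨i, rfl⟩⟩
  refine ⟨(Algebra.adjoin ℝ (Set.range T)).val.comp (aeval f), fun i => ?_⟩
  simp [f]

theorem deg_X_mul {n d : ℕ} (i : Fin n) {p : MP n} (hp : p.totalDegree ≤ d) :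
    (X i * p).totalDegree ≤ d + 1 := by
  refine (totalDegree_mul _ _).trans ?_
  rw [totalDegree_X]; omega

theorem mon_zero {n : ℕ} (α : Fin n →₀ ℕ) (hα : mdeg α = 0) :
    (monomial α (1 : ℝ) : MP n) = 1 := by
  have : α = 0 := by
    ext i
    have h1 : α i ≤ mdeg α := by
      by_cases hi : i ∈ α.support
      · exact Finset.single_le_sum (f := fun i => α i) (fun _ _ => Nat.zero_le _) hi
      · rw [Finsupp.notMem_support_iff.1 hi]; exact Nat.zero_le _
    rw [Finsupp.zero_apply]; omega
  subst this
  rfl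

theorem mon_succ {n : ℕ} (d : ℕ) (α : Fin n →₀ ℕ) (hα : mdeg α = d + 1) :
    ∃ i β, mdeg β = d ∧ (monomial α (1 : ℝ) : MP n) = X i * monomial β 1 := by
  obtain ⟨i, hi⟩ : ∃ i, α i ≠ 0 := by
    by_contra hne
    push Not at hne
    have : α = 0 := by ext i; exact hne i
    subst this
    simp [mdeg] at hα
  obtain ⟨β, rfl⟩ : ∃ β, α = Finsupp.single i 1 + β :=
    ⟨α - Finsupp.single i 1, by
      rw [add_tsub_cancel_of_le]
      rw [Finsupp.single_le_iff]; omega⟩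
  have hm : mdeg (Finsupp.single i 1 + β) = 1 + mdeg β := by
    unfold mdeg
    rw [Finsupp.sum_add_index' (by simp) (by simp)]
    simp
  refine ⟨i, β, by omega, ?_⟩
  rw [X, monomial_mul, one_mul]

/-- A normal form map `ν` onto polynomials of degree `< s`. -/
theorem exists_nf {n s : ℕ} (hs : 1 ≤ s) (V : Submodule ℝ (MP n))
    (F1 : ∀ p : MP n, p.totalDegree ≤ 2 * s → ∃ q : MP n, q.totalDegree ≤ s - 1 ∧ p - q ∈ V)
    (F2 : ∀ (i : Fin n) (p : MP n), p ∈ V → (X i * p).totalDegree ≤ 2 * s → X i * p ∈ V) :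
    ∃ ν : MP n →ₗ[ℝ] MP n, (∀ p, (ν p).totalDegree ≤ s - 1) ∧
      (∀ p q, ν p = 0 → ν (q * p) = 0) ∧
      (∀ p, ν (p - ν p) = 0) ∧
      (∀ p, p.totalDegree ≤ 2 * s → p - ν p ∈ V) ∧
      (∀ p, p - ν p ∈ Ideal.span {k : MP n | k ∈ V ∧ k.totalDegree ≤ s}) := by
  classical
  obtain ⟨W, hWV, hW⟩ : ∃ W : Submodule ℝ (MP n), Disjoint W V ∧ W ≤ RxT n (s - 1) ∧
      RxT n (s - 1) ≤ W ⊔ V := by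
    obtain ⟨C, hC⟩ := Submodule.exists_isCompl (V ⊓ RxT n (s - 1))
    refine ⟨RxT n (s - 1) ⊓ C, ?_, inf_le_left, ?_⟩
    · rw [Submodule.disjoint_def]
      intro x hx hxV
      exact (Submodule.disjoint_def.1 hC.disjoint) x ⟨hxV, hx.1⟩ hx.2
    · intro a ha
      have : a ∈ (V ⊓ RxT n (s - 1)) ⊔ C := by rw [hC.sup_eq_top]; trivial
      obtain ⟨v, hv, c, hc, rfl⟩ := Submodule.mem_sup.1 this
      refine Submodule.mem_sup.2 ⟨c, ⟨?_, hc⟩, v, hv.1, add_comm _ _⟩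
      simpa using Submodule.sub_mem _ ha hv.2
  obtain ⟨hW1, hW2⟩ := hW
  obtain ⟨C, hVC, hC⟩ := hWV.symm.exists_isCompl
  let ρ : MP n →ₗ[ℝ] W := W.projectionOnto C hC.symm
  have ρV : ∀ p ∈ V, ρ p = 0 := fun p hp =>
    (Submodule.projectionOnto_apply_eq_zero_iff hC.symm).2 (hVC hp)
  have ρW : ∀ w : W, ρ w = w := fun w => Submodule.projectionOnto_apply_left hC.symm w
  have degW : ∀ w : W, (w : MP n).totalDegree ≤ s - 1 := fun w =>
    (mem_restrictTotalDegree _ _ _).1 (hW1 w.2)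
  have ρsub : ∀ p : MP n, p.totalDegree ≤ 2 * s → p - ρ p ∈ V := by
    intro p hp
    obtain ⟨q, hq, hpq⟩ := F1 p hp
    obtain ⟨w, hw, v, hv, hwv⟩ := Submodule.mem_sup.1 (hW2 ((mem_restrictTotalDegree _ _ _).2 hq))
    have h1 : p = w + (v + (p - q)) := by rw [← add_assoc, hwv]; ring
    have h2 : v + (p - q) ∈ V := V.add_mem hv hpq
    have h3 : ρ p = ⟨w, hw⟩ := by
      rw [h1, map_add, ρV _ h2, add_zero]; exact ρW ⟨w, hw⟩
    rw [h3]
    convert h2 using 1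
    show p - w = _
    rw [← hwv]; ring
  let T : Fin n → Module.End ℝ W := fun i => ρ ∘ₗ (LinearMap.mulLeft ℝ (X i : MP n)) ∘ₗ W.subtype
  have hTa : ∀ i w, T i w = ρ (X i * (w : MP n)) := fun i w => rfl
  -- key reduction
  have hTρ : ∀ i (p : MP n), p.totalDegree + 1 ≤ 2 * s → T i (ρ p) = ρ (X i * p) := by
    intro i p hp
    have h1 : p - ρ p ∈ V := ρsub p (by omega)
    have h2 : (p - (ρ p : MP n)).totalDegree ≤ 2 * s - 1 :=
      (totalDegree_sub _ _).trans (max_le (by omega) ((degW _).trans (by omega)))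
    have h3 := F2 i _ h1 ((deg_X_mul i h2).trans (by omega))
    have h4 := ρV _ h3
    rw [mul_sub, map_sub, sub_eq_zero] at h4
    rw [hTa, h4]
  have hTT : ∀ i j, T i * T j = T j * T i := by
    have key : ∀ i j w, T i (T j w) = ρ (X i * (X j * (w : MP n))) := by
      intro i j w
      rw [hTa j, hTρ]
      have := deg_X_mul j (degW w)
      omega
    intro i j
    apply LinearMap.ext
    intro w
    rw [Module.End.mul_apply, Module.End.mul_apply, key, key, mul_left_comm]
  obtain ⟨Θ, hΘ⟩ := exists_hom_of_comm T hTT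
  let ν' : MP n →ₗ[ℝ] W := (LinearMap.applyₗ (ρ 1)) ∘ₗ Θ.toLinearMap
  have hν' : ∀ p, ν' p = Θ p (ρ 1) := fun p => rfl
  have hmul : ∀ p q, ν' (q * p) = Θ q (ν' p) := by
    intro p q
    rw [hν', map_mul]; rfl
  have hmon : ∀ (d : ℕ) (α : Fin n →₀ ℕ), mdeg α = d → d ≤ 2 * s →
      ν' (monomial α 1) = ρ (monomial α 1) := by
    intro d
    induction d with
    | zero =>
      intro α hα _
      rw [mon_zero α hα, hν', map_one]; rfl
    | succ d ih =>
      intro α hα hd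
      obtain ⟨i, β, hβ, hX⟩ := mon_succ d α hα
      rw [hX, hmul, ih β hβ (by omega), hΘ, hTρ]
      rw [mdeg_eq _ _ one_ne_zero]; omega
  have hlow : ∀ p : MP n, p.totalDegree ≤ 2 * s → ν' p = ρ p := by
    intro p hp
    rw [p.as_sum, map_sum, map_sum]
    refine Finset.sum_congr rfl fun β hβ => ?_
    have h1 : mdeg β ≤ 2 * s := (le_totalDegree hβ).trans hp
    have h2 : (monomial β (coeff β p) : MP n) = coeff β p • monomial β 1 := by
      rw [smul_monomial, smul_eq_mul, mul_one]
    rw [h2, map_smul, map_smul, hmon _ β rfl h1]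
  have hνW : ∀ w : W, ν' w = w := by
    intro w
    rw [hlow _ ((degW w).trans (by omega)), ρW]
  refine ⟨W.subtype ∘ₗ ν', fun p => degW _, ?_, ?_, ?_, ?_⟩
  · intro p q h
    have h : ((ν' p : W) : MP n) = 0 := h
    have h : ν' p = 0 := Subtype.ext h
    show ((ν' (q * p) : W) : MP n) = 0
    rw [hmul, h, map_zero]; rfl
  · intro p
    show ((ν' (p - ν' p) : W) : MP n) = 0
    rw [map_sub, hνW, sub_self]; rfl
  · intro p hp
    show p - ν' p ∈ V
    rw [hlow p hp]; exact ρsub p hp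
  · intro p
    show p - ν' p ∈ _
    have base : ∀ q : MP n, q.totalDegree ≤ s →
        q - ρ q ∈ Ideal.span {k : MP n | k ∈ V ∧ k.totalDegree ≤ s} := by
      intro q hq
      exact Ideal.subset_span ⟨ρsub q (by omega),
        (totalDegree_sub _ _).trans (max_le hq ((degW _).trans (by omega)))⟩
    induction p using MvPolynomial.induction_on with
    | C a =>
      rw [hlow _ (by simp)]
      exact base _ (by simp)
    | add p q hp hq =>
      rw [map_add]
      convert Ideal.add_mem _ hp hq using 1
      rw [Submodule.coe_add]; ring
    | mul_X p i ih =>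
      rw [mul_comm p, hmul, hΘ, hTa]
      have h1 := base (X i * (ν' p : MP n)) ((deg_X_mul i (degW _)).trans (by omega))
      convert Ideal.add_mem _ (Ideal.mul_mem_left _ (X i) ih) h1 using 1
      ring

theorem core {n s : ℕ} (hs : 1 ≤ s) (V : Submodule ℝ (MP n))
    (F1 : ∀ p : MP n, p.totalDegree ≤ 2 * s → ∃ q : MP n, q.totalDegree ≤ s - 1 ∧ p - q ∈ V)
    (F2 : ∀ (i : Fin n) (p : MP n), p ∈ V → (X i * p).totalDegree ≤ 2 * s → X i * p ∈ V)
    (Ls : Module.Dual ℝ (MP n)) (hV : ∀ p ∈ V, Ls p = 0) (hpsd : momPSD Ls s) :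
    ∀ p σ : MP n, ∀ m : ℕ, IsSumSq σ → p ^ (2 * m) + σ ∈ Ideal.span (momKer Ls s) →
      p ∈ Ideal.span (momKer Ls s) := by
  obtain ⟨ν, hdeg, hid, hνν, hlow, hspan⟩ := exists_nf hs V F1 F2
  set J := Ideal.span (momKer Ls s) with hJ
  let L : Module.Dual ℝ (MP n) := Ls ∘ₗ ν
  have hL0 : ∀ p, ν p = 0 → ∀ q, L (p * q) = 0 := by
    intro p hp q
    show Ls (ν (p * q)) = 0
    rw [mul_comm, hid p q hp, map_zero]
  have hLlow : ∀ p : MP n, p.totalDegree ≤ 2 * s → L p = Ls p := by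
    intro p hp
    have := hV _ (hlow p hp)
    rw [map_sub, sub_eq_zero] at this
    exact this.symm
  have hred : ∀ p q, L (p * q) = L (ν p * q) := by
    intro p q
    have := hL0 _ (hνν p) q
    rw [sub_mul, map_sub, sub_eq_zero] at this
    exact this
  have hdd : ∀ {p q : MP n} , p.totalDegree ≤ s → q.totalDegree ≤ s → (p * q).totalDegree ≤ 2 * s := by
    intro p q hp hq
    exact (totalDegree_mul _ _).trans (by omega)
  have hνs : ∀ p, (ν p).totalDegree ≤ s := fun p => (hdeg p).trans (by omega)
  have hLpos : ∀ p, 0 ≤ L (p * p) := by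
    intro p
    rw [hred, mul_comm, hred, hLlow _ (hdd (hνs p) (hνs p))]
    exact hpsd _ (hνs p)
  -- `V ∩ R_s ⊆ Ker`
  have hshift : ∀ (q p : MP n), p ∈ V → p.totalDegree ≤ s → q.totalDegree ≤ s → Ls (p * q) = 0 := by
    intro q p hp hps hq
    have hmem : ∀ (d : ℕ) (β : Fin n →₀ ℕ), mdeg β = d → d ≤ s → monomial β 1 * p ∈ V := by
      intro d
      induction d with
      | zero =>
        intro β hβ _
        rw [mon_zero β hβ, one_mul]; exact hp
      | succ d ih =>
        intro β hβ hd
        obtain ⟨i, γ, hγ, hX⟩ := mon_succ d β hβ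
        rw [hX, mul_assoc]
        refine F2 i _ (ih γ hγ (by omega)) ?_
        refine (deg_X_mul i (totalDegree_mul _ _)).trans ?_
        rw [mdeg_eq _ _ one_ne_zero]; omega
    refine mom_ext Ls s p (fun β hβ => ?_) q hq
    rw [mul_comm]
    exact hV _ (hmem _ β rfl hβ)
  have hKJ : Ideal.span {k : MP n | k ∈ V ∧ k.totalDegree ≤ s} ≤ J := by
    apply Ideal.span_mono
    rintro k ⟨hk, hks⟩
    rw [mem_momKer_iff]
    exact ⟨hks, fun q hq => hshift q k hk hks hq⟩
  let Z : Ideal (MP n) :=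
    { carrier := {p | ∀ q, L (p * q) = 0}
      add_mem' := by
        intro a b ha hb q
        rw [add_mul, map_add, ha q, hb q, add_zero]
      zero_mem' := by intro q; simp
      smul_mem' := by
        intro c p hp q
        rw [smul_eq_mul, mul_comm c, mul_assoc]
        exact hp _ }
  have hZ : ∀ p, p ∈ Z ↔ ∀ q, L (p * q) = 0 := fun p => Iff.rfl
  have hJZ : J ≤ Z := by
    rw [hJ, Ideal.span_le]
    intro p hp
    rw [mem_momKer_iff] at hp
    show p ∈ Z
    rw [hZ]
    intro q
    rw [mul_comm, hred, mul_comm, hLlow _ (hdd hp.1 (hνs q))]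
    exact hp.2 _ (hνs q)
  have hZJ : Z ≤ J := by
    intro p hp
    rw [hZ] at hp
    have h1 : ν p ∈ J := by
      apply Ideal.subset_span
      rw [mem_momKer_iff]
      refine ⟨hνs p, fun q hq => ?_⟩
      rw [← hLlow _ (hdd (hνs p) hq), ← hred, hp]
    have h2 := J.add_mem (hKJ (hspan p)) h1
    simpa using h2
  have hZsq : ∀ p, L (p * p) = 0 → p ∈ Z := by
    intro p hp
    rw [hZ]
    intro q
    exact psd_ker L p q (fun c => hLpos _) hp
  have hrad : Z.IsRadical := by
    rw [Ideal.isRadical_iff_pow_one_lt 2 one_lt_two]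
    intro r hr
    apply hZsq
    have := (hZ _).1 hr 1
    rwa [mul_one, sq] at this
  have hσpos : ∀ σ : MP n, IsSumSq σ → 0 ≤ L σ := by
    intro σ hσ
    induction hσ with
    | zero => simp
    | sq_add a _ ih => rw [map_add]; have := hLpos a; linarith
  intro p σ m hσ h
  apply hZJ
  have h1 := (hZ _).1 (hJZ h) 1
  rw [mul_one, map_add, mul_comm 2 m, pow_mul, sq] at h1
  have h2 := hσpos σ hσ
  have h3 := hLpos (p ^ m)
  have h4 := hZsq (p ^ m) (by linarith)
  exact hrad ⟨m, h4⟩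
/-- Let `L*` be generic in `K_{t,⪰}`, `1 ≤ s ≤ ⌊t/2⌋`, `G_t = H_t ∪ W_t`,
and assume `dim π_{2s}(G_t^⊥) = dim π_{s−1}(G_t^⊥) = dim π_{2s}((G_t⁺)^⊥)`.  Then the ideal
`J = (Ker M_s(L*))` is real radical and contained in the vanishing ideal of `V_ℝ(I)`;
if moreover `s ≥ D = max_j deg h_j`, then `J = √[ℝ]I`. -/
theorem kernelIdeal_realRadical {n m s t : ℕ} (h : Fin m → MP n)
    (hs1 : 1 ≤ s) (hst : s ≤ t / 2)
    (Lstar : Module.Dual ℝ (MP n)) (hgen : Generic h t Lstar)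
    (hdim1 : dimProj (2 * s) (Hset h t ∪ Wset h t Lstar) =
      dimProj (s - 1) (Hset h t ∪ Wset h t Lstar))
    (hdim2 : dimProj (2 * s) (Hset h t ∪ Wset h t Lstar) =
      dimProj (2 * s) (plusOp (Hset h t ∪ Wset h t Lstar)))
    (J : Ideal (MP n)) (hJ : J = Ideal.span (momKer Lstar s)) :
    (J : Set (MP n)) = realRad J ∧
    (∀ p ∈ J, ∀ v : Fin n → ℝ, (∀ j, eval v (h j) = 0) → eval v p = 0) ∧
    ((∀ j, (h j).totalDegree ≤ s) →
      (J : Set (MP n)) = realRad (Ideal.span (Set.range h))) := by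
  subst hJ
  set G := Hset h t ∪ Wset h t Lstar with hG
  have hpsd : momPSD Lstar s := fun p hp => hgen.1.2 p (hp.trans hst)
  have hV : ∀ p ∈ Submodule.span ℝ G, Lstar p = 0 := by
    have : Submodule.span ℝ G ≤ LinearMap.ker Lstar := by
      rw [Submodule.span_le]
      rintro g (hg | ⟨α, g, hα, hg, rfl⟩)
      · exact hgen.1.1 g hg
      · have := hg.2 α hα
        rw [mul_comm] at this
        exact this
    exact fun p hp => this hp
  have hcore := core hs1 (Submodule.span ℝ G)
    (dim_cond1 (by omega) G hdim1) (dim_cond2 G hdim2) Lstar hV hpsd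
  refine ⟨?_, ?_, ?_⟩
  · ext p
    constructor
    · exact fun hp => le_RR _ hp
    · intro hp
      obtain ⟨k, -, σ, hσ, h'⟩ := (mem_realRad _ _).1 hp
      exact hcore p σ k hσ h'
  · intro p hp v hv
    have : Ideal.span (momKer Lstar s) ≤ RingHom.ker (eval v) := by
      rw [Ideal.span_le]
      intro g hg
      have h1 := generic_ker h Lstar hgen _ (eval_mem_Kpos t h v hv) g
        (momKer_mono Lstar s _ hst hgen.1.2 hg)
      show eval v g = 0
      simpa using h1
    exact this hp
  · intro hdeg
    ext p
    constructor
    · intro hp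
      have : Ideal.span (momKer Lstar s) ≤ RR (Ideal.span (Set.range h)) := by
        rw [Ideal.span_le]
        intro g hg
        exact momKer_sub_realRad h Lstar hgen g (momKer_mono Lstar s _ hst hgen.1.2 hg)
      exact this hp
    · intro hp
      obtain ⟨k, -, σ, hσ, h'⟩ := (mem_realRad _ _).1 hp
      refine hcore p σ k hσ ?_
      have : Ideal.span (Set.range h) ≤ Ideal.span (momKer Lstar s) := by
        apply Ideal.span_mono
        rintro _ ⟨j, rfl⟩
        refine ⟨hdeg j, fun β hβ => ?_⟩
        rw [mul_comm]
        have := hdeg j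
        exact hgen.1.1 _ ⟨β, j, by omega, rfl⟩
      exact this h'
end

section
/- Let 1 ≤ s ≤ ⌊t/2⌋ and let G_t = H_t ∪ W_t. If rank M_s(L*) = rank M_{s−1}(L*) holds for some generic L* ∈ K_{t,⪰}, then rank M_s(L) = rank M_{s−1}(L) holds for every linear functional L on ℝ[x]_t vanishing on G_t (i.e. for every L ∈ G_t^⊥). -/
open MvPolynomial

theorem aux_finite (n s : ℕ) : Module.Finite ℝ (RxT n s) := by
  infer_instance

theorem aux_mono (n s : ℕ) : RxT n (s - 1) ≤ RxT n s := by
  intro p hp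
  rw [mem_restrictTotalDegree] at *
  omega

theorem aux_apply {n s : ℕ} (L : Module.Dual ℝ (MP n)) (p q : RxT n s) :
    momBil L s p q = L ((p : MP n) * (q : MP n)) := rfl

theorem aux_decomp {n s : ℕ} (L : Module.Dual ℝ (MP n)) :
    momBil L (s - 1) = (Submodule.inclusion (aux_mono n s)).dualMap ∘ₗ momBil L s ∘ₗ
      Submodule.inclusion (aux_mono n s) := by
  ext p q
  rfl

theorem aux_ker {n s : ℕ} (L : Module.Dual ℝ (MP n))
    (hr : momRank L s = momRank L (s - 1)) (v : RxT n s) :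
    ∃ u : RxT n (s - 1), momBil L s (v - Submodule.inclusion (aux_mono n s) u) = 0 := by
  have := aux_finite n s
  have := aux_finite n (s - 1)
  set ι := Submodule.inclusion (aux_mono n s)
  have h1 : LinearMap.range (momBil L s ∘ₗ ι) ≤ LinearMap.range (momBil L s) :=
    LinearMap.range_comp_le_range _ _
  have h2 : momRank L (s - 1) ≤ Module.finrank ℝ (LinearMap.range (momBil L s ∘ₗ ι)) := by
    unfold momRank
    rw [aux_decomp L, LinearMap.range_comp]
    exact Submodule.finrank_map_le _ _
  have h3 := Submodule.eq_of_le_of_finrank_le h1 (by rw [← hr] at h2; exact h2)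
  have h4 : momBil L s v ∈ LinearMap.range (momBil L s ∘ₗ ι) := by
    rw [h3]; exact ⟨v, rfl⟩
  obtain ⟨u, hu⟩ := h4
  refine ⟨u, ?_⟩
  rw [map_sub, ← hu]
  simp

theorem aux_rank {n s : ℕ} (L : Module.Dual ℝ (MP n))
    (hr : ∀ v : RxT n s, ∃ u : RxT n (s - 1),
      momBil L s (v - Submodule.inclusion (aux_mono n s) u) = 0) :
    momRank L s = momRank L (s - 1) := by
  have := aux_finite n s
  have := aux_finite n (s - 1)
  set ι := Submodule.inclusion (aux_mono n s) with hι
  have h1 : LinearMap.range (momBil L s ∘ₗ ι) = LinearMap.range (momBil L s) := by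
    apply le_antisymm (LinearMap.range_comp_le_range _ _)
    rintro _ ⟨v, rfl⟩
    obtain ⟨u, hu⟩ := hr v
    refine ⟨u, ?_⟩
    rw [map_sub, sub_eq_zero] at hu
    exact hu.symm
  have hinj : Function.Injective (ι.dualMap ∘ₗ (LinearMap.range (momBil L s)).subtype) := by
    refine (injective_iff_map_eq_zero _).2 ?_
    rintro ⟨_, v, rfl⟩ hv
    ext w
    obtain ⟨u, hu⟩ := hr w
    have e1 : momBil L s v (ι u) = 0 := LinearMap.congr_fun hv u
    have e2 := LinearMap.congr_fun hu v
    have e3 : momBil L s v (w - ι u) = 0 := by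
      rw [aux_apply, mul_comm]; exact e2
    rw [map_sub, e1, sub_zero] at e3
    simpa using e3
  unfold momRank
  rw [aux_decomp L, LinearMap.range_comp, h1]
  rw [← LinearMap.finrank_range_of_inj hinj, LinearMap.range_comp, Submodule.range_subtype]

theorem aux_psd {n s T : ℕ} (L : Module.Dual ℝ (MP n)) (hst : s ≤ T) (hL : momPSD L T)
    (g : MP n) (hg : g.totalDegree ≤ s) (h0 : L (g * g) = 0) (q : MP n)
    (hq : q.totalDegree ≤ T) : L (g * q) = 0 := by
  by_contra hne
  have key : ∀ c : ℝ, 0 ≤ L (q * q) + 2 * c * L (g * q) := by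
    intro c
    have h1 := hL (q + c • g) ((totalDegree_add _ _).trans
      (max_le hq ((totalDegree_smul_le _ _).trans (hg.trans hst))))
    have h2 : (q + c • g) * (q + c • g) = q * q + (2 * c) • (g * q) + (c * c) • (g * g) := by
      simp only [smul_eq_C_mul, C_mul, map_ofNat]
      ring
    rw [h2] at h1
    simpa [h0] using h1
  have := key (-(L (q * q) + 1) / (2 * L (g * q)))
  have e : 2 * (-(L (q * q) + 1) / (2 * L (g * q))) * L (g * q) = -(L (q * q) + 1) := by
    field_simp
  rw [e] at this
  linarith

theorem momRank_eq_forall_of_generic {n m s t : ℕ} (h : Fin m → MP n)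
    (hs1 : 1 ≤ s) (hst : s ≤ t / 2)
    (Lstar : Module.Dual ℝ (MP n)) (hgen : Generic h t Lstar)
    (hrank : momRank Lstar s = momRank Lstar (s - 1)) :
    ∀ L : Module.Dual ℝ (MP n), (∀ g ∈ Hset h t ∪ Wset h t Lstar, L g = 0) →
      momRank L s = momRank L (s - 1) := by
  intro L hL
  apply aux_rank
  intro v
  obtain ⟨u, hu⟩ := aux_ker Lstar hrank v
  refine ⟨u, ?_⟩
  set g := v - Submodule.inclusion (aux_mono n s) u
  have hg : (g : MP n).totalDegree ≤ s := (mem_restrictTotalDegree _ _ _).1 g.2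
  have hk : (g : MP n) ∈ momKer Lstar (t / 2) := by
    refine ⟨hg.trans hst, fun β hβ => ?_⟩
    refine aux_psd Lstar hst hgen.1.2 g hg (LinearMap.congr_fun hu g) _ ?_
    exact (totalDegree_monomial_le _ _).trans hβ
  ext q
  have hq : (q : MP n).totalDegree ≤ s := (mem_restrictTotalDegree _ _ _).1 q.2
  rw [aux_apply, (q : MP n).as_sum, Finset.mul_sum, map_sum]
  refine Finset.sum_eq_zero fun α hα => ?_
  have h1 := hL (monomial α 1 * (g : MP n))
    (Or.inr ⟨α, g, ((le_totalDegree hα).trans hq).trans hst, hk, rfl⟩)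
  have h2 : (g : MP n) * monomial α (coeff α (q : MP n))
      = coeff α (q : MP n) • (monomial α 1 * (g : MP n)) := by
    rw [← smul_mul_assoc, smul_monomial, smul_eq_mul, mul_one, mul_comm]
  rw [h2, map_smul, h1, smul_zero]
end
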